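/- Let d ≥ 2, let 𝓑 ⊂ ℝ^d be a closed ball, and let u be a C² function on ℝ^d \ 𝓑, not identically zero, satisfying Δu + ⟨b, ∇u⟩ + Vu = 0 on ℝ^d \ 𝓑, where b, V are Borel measurable with sup|b| ≤ M and sup|V| ≤ q². Assume condition (G): there exist constants r > 0 and C > 0 such that ∫_{B_r(x)} |∇u(y)|² dy ≤ C ∫_{B_r(x)} u(y)² dy for all sufficiently large |x|. Then, with κ := √(2(M√C + q² + C)) + 1, there exists a constant C_κ > 0 such that ∫_{B_r(x)} u(y)² dy ≥ C_κ exp(−κ|x|) for all sufficiently large |x|. In particular, if for every k > 0 there is a constant C_k with |u(x)| ≤ C_k e^{−k|x|} for all x ∈ ℝ^d \ 𝓑, then u ≡ 0. -/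

import Mathlib

open Metric Set Filter

noncomputable section

/-- `ℝ^d` as a Euclidean space. -/
abbrev Euc (d : ℕ) := EuclideanSpace ℝ (Fin d)

/-- First partial derivative `∂u/∂xᵢ`. -/
def pd {d : ℕ} (u : Euc d → ℝ) (i : Fin d) (x : Euc d) : ℝ :=
  fderiv ℝ u x (EuclideanSpace.single i 1)

/-- Second partial derivative `∂²u/∂xᵢ∂xⱼ`. -/
def pd2 {d : ℕ} (u : Euc d → ℝ) (i j : Fin d) (x : Euc d) : ℝ :=
  fderiv ℝ (fun y => pd u j y) x (EuclideanSpace.single i 1)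

/-- The second-order operator `𝓛u = Σ aᶦʲ ∂ᵢⱼu + Σ bᶦ ∂ᵢu`. -/
def Lop {d : ℕ} (a : Euc d → Matrix (Fin d) (Fin d) ℝ) (b : Euc d → Euc d)
    (u : Euc d → ℝ) (x : Euc d) : ℝ :=
  (∑ i, ∑ j, a x i j * pd2 u i j x) + ∑ i, b x i * pd u i x

/-- Frobenius norm of a matrix. -/
def frob {d : ℕ} (m : Matrix (Fin d) (Fin d) ℝ) : ℝ :=
  Real.sqrt (∑ i, ∑ j, (m i j) ^ 2)

/-- The quadratic form `⟨ξ, m ξ⟩`. -/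
def quadForm {d : ℕ} (m : Matrix (Fin d) (Fin d) ℝ) (ξ : Euc d) : ℝ :=
  ∑ i, ∑ j, m i j * ξ i * ξ j

/-- Local Hölder continuity on a set. -/
def LocallyHolderOn {E F : Type*} [PseudoMetricSpace E] [PseudoMetricSpace F]
    (f : E → F) (s : Set E) : Prop :=
  ∀ x ∈ s, ∃ (C r : NNReal), 0 < r ∧ r ≤ 1 ∧ ∃ ε > 0, HolderOnWith C r f (Metric.ball x ε ∩ s)

/-- Local Hölder continuity. -/
def LocallyHolder {E F : Type*} [PseudoMetricSpace E] [PseudoMetricSpace F] (f : E → F) : Prop :=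
  LocallyHolderOn f Set.univ

/-- The set of `λ ∈ ℝ` admitting a positive C² supersolution of `𝓛φ + Vφ ≤ λφ` on `D`. -/
def supersolutions {d : ℕ} (a : Euc d → Matrix (Fin d) (Fin d) ℝ) (b : Euc d → Euc d)
    (V : Euc d → ℝ) (D : Set (Euc d)) : Set ℝ :=
  {lam | ∃ φ : Euc d → ℝ, (∀ x ∈ D, 0 < φ x) ∧ ContDiffOn ℝ 2 φ D ∧
    ∀ x ∈ D, Lop a b φ x + V x * φ x ≤ lam * φ x}

/-- The generalized principal eigenvalue `λ*(𝓛,V)` on `D`. -/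
def lamStar {d : ℕ} (a : Euc d → Matrix (Fin d) (Fin d) ℝ) (b : Euc d → Euc d)
    (V : Euc d → ℝ) (D : Set (Euc d)) : ℝ :=
  sInf (supersolutions a b V D)

/-- `λ*(𝓛,V)` is finite: the defining set is nonempty and bounded below. -/
def lamStarFinite {d : ℕ} (a : Euc d → Matrix (Fin d) (Fin d) ℝ) (b : Euc d → Euc d)
    (V : Euc d → ℝ) (D : Set (Euc d)) : Prop :=
  (supersolutions a b V D).Nonempty ∧ BddBelow (supersolutions a b V D)

/-- A ground state of `𝓛 + W` in the open connected set `D`: a positive C² solution of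
minimal growth at infinity. -/
def IsGroundState {d : ℕ} (a : Euc d → Matrix (Fin d) (Fin d) ℝ) (b : Euc d → Euc d)
    (W : Euc d → ℝ) (u : Euc d → ℝ) (D : Set (Euc d)) : Prop :=
  (∀ x ∈ D, 0 < u x) ∧ ContDiffOn ℝ 2 u D ∧ (∀ x ∈ D, Lop a b u x + W x * u x = 0) ∧
  ∀ K : Set (Euc d), IsCompact K → K ⊆ D →
    ∀ v : Euc d → ℝ, ContDiffOn ℝ 2 v (D \ K) → (∀ x ∈ D \ K, 0 < v x) →
      (∀ x ∈ D \ K, Lop a b v x + W x * v x ≤ 0) →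
      ∃ K' : Set (Euc d), IsCompact K' ∧ K ⊆ K' ∧ K' ⊆ D ∧
        ∃ κ > 0, ∀ x ∈ D \ K', κ * u x ≤ v x

/-- Membership in `C₀⁺(ℝ^d)`: continuous, nonnegative, not identically zero, vanishing
at infinity. -/
def C0plus {d : ℕ} (h : Euc d → ℝ) : Prop :=
  Continuous h ∧ (∀ x, 0 ≤ h x) ∧ (∃ x, h x ≠ 0) ∧ Tendsto h (cocompact (Euc d)) (nhds 0)

/-- `λ*` is strictly monotone at `V` on the right. -/
def StrictMonoRight {d : ℕ} (a : Euc d → Matrix (Fin d) (Fin d) ℝ) (b : Euc d → Euc d)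
    (V : Euc d → ℝ) : Prop :=
  ∀ h : Euc d → ℝ, C0plus h →
    lamStar a b V Set.univ < lamStar a b (fun x => V x + h x) Set.univ

/-- `λ*` is strictly monotone at `V` (on both sides). -/
def StrictMonoAt {d : ℕ} (a : Euc d → Matrix (Fin d) (Fin d) ℝ) (b : Euc d → Euc d)
    (V : Euc d → ℝ) : Prop :=
  ∀ h : Euc d → ℝ, C0plus h →
    lamStar a b (fun x => V x - h x) Set.univ < lamStar a b V Set.univ ∧
    lamStar a b V Set.univ < lamStar a b (fun x => V x + h x) Set.univ

open MeasureTheory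

/-! ### Partial derivatives -/

lemma HasLineDerivAt.pd_eq {d : ℕ} {f : Euc d → ℝ} {i : Fin d} {x : Euc d} {f' : ℝ}
    (h : HasLineDerivAt ℝ f f' x (EuclideanSpace.single i 1)) (hf : DifferentiableAt ℝ f x) :
    pd f i x = f' :=
  (hf.hasFDerivAt.hasLineDerivAt _).unique h

lemma DifferentiableAt.hasLineDerivAt_pd {d : ℕ} {f : Euc d → ℝ} {x : Euc d}
    (hf : DifferentiableAt ℝ f x) (i : Fin d) :
    HasLineDerivAt ℝ f (pd f i x) x (EuclideanSpace.single i 1) :=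
  hf.hasFDerivAt.hasLineDerivAt _

lemma ContDiff.pd {d : ℕ} {f : Euc d → ℝ} {m n : WithTop ℕ∞} (hf : ContDiff ℝ n f)
    (hmn : m + 1 ≤ n) (i : Fin d) : ContDiff ℝ m (pd f i) :=
  (hf.fderiv_right hmn).clm_apply contDiff_const

lemma ContDiff.continuous_pd2 {d : ℕ} {f : Euc d → ℝ} (hf : ContDiff ℝ 2 f) (i j : Fin d) :
    Continuous (pd2 f i j) :=
  ((hf.pd (m := 1) (by norm_num) j).pd (m := 0) (by norm_num) i).continuous

lemma HasCompactSupport.pd {d : ℕ} {f : Euc d → ℝ} (hf : HasCompactSupport f) (i : Fin d) :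
    HasCompactSupport (pd f i) :=
  hf.fderiv_apply (𝕜 := ℝ) _

lemma pd2_comm {d : ℕ} {f : Euc d → ℝ} (hf : ContDiff ℝ 2 f) (i j : Fin d) (x : Euc d) :
    pd2 f i j x = pd2 f j i x := by
  have hs := hf.contDiffAt (x := x) |>.isSymmSndFDerivAt (by simp)
  have hd : DifferentiableAt ℝ (fderiv ℝ f) x :=
    (hf.fderiv_right (m := 1) (by norm_num)).differentiable (by norm_num) x
  have key : ∀ i j : Fin d, pd2 f i j x =
      fderiv ℝ (fderiv ℝ f) x (EuclideanSpace.single i 1) (EuclideanSpace.single j 1) := by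
    intro i j
    unfold pd2 _root_.pd
    rw [fderiv_clm_apply hd (differentiableAt_const _)]
    simp
  rw [key, key, hs.eq]

lemma Filter.EventuallyEq.pd_eq {d : ℕ} {f g : Euc d → ℝ} {x : Euc d} (h : f =ᶠ[nhds x] g)
    (i : Fin d) : pd f i x = pd g i x := by
  simp only [pd, h.fderiv_eq]

lemma Filter.EventuallyEq.pd2_eq {d : ℕ} {f g : Euc d → ℝ} {x : Euc d} (h : f =ᶠ[nhds x] g)
    (i j : Fin d) : pd2 f i j x = pd2 g i j x := by
  have : (fun y => pd f j y) =ᶠ[nhds x] fun y => pd g j y :=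
    h.eventuallyEq_nhds.mono fun y hy => Filter.EventuallyEq.pd_eq hy j
  simp only [pd2, this.fderiv_eq]

lemma integral_pd_eq_zero {d : ℕ} {f : Euc d → ℝ} (hf : ContDiff ℝ 1 f)
    (hc : HasCompactSupport f) (i : Fin d) : ∫ x, pd f i x = 0 := by
  have hint : Integrable (pd f i) :=
    (hf.pd (m := 0) (by norm_num) i).continuous.integrable_of_hasCompactSupport (hc.pd i)
  have := integral_mul_fderiv_eq_neg_fderiv_mul_of_integrable (μ := volume)
    (f := fun _ : Euc d => (1 : ℝ)) (g := f) (v := EuclideanSpace.single i 1)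
    (by simp) (by simp only [one_mul]; exact hint)
    (by simpa using hf.continuous.integrable_of_hasCompactSupport hc)
    (fun x _ => differentiableAt_const _)
    (fun x _ => hf.differentiable (by norm_num) x)
  simpa [pd] using this

lemma hasLineDerivAt_coord_sub {d : ℕ} (z : Euc d) (i j : Fin d) (x : Euc d) :
    HasLineDerivAt ℝ (fun y : Euc d => y j - z j) (if j = i then 1 else 0) x
      (EuclideanSpace.single i 1) := by
  have h : HasDerivAt (fun t : ℝ => x j + t * (if j = i then 1 else 0) - z j)
      (1 * (if j = i then 1 else 0)) 0 :=
    (((hasDerivAt_id (0 : ℝ)).mul_const _).const_add _).sub_const _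
  rw [one_mul] at h
  have e : (fun t : ℝ => (x + t • EuclideanSpace.single i (1 : ℝ)) j - z j)
      = fun t : ℝ => x j + t * (if j = i then 1 else 0) - z j := by
    ext t; simp
  unfold HasLineDerivAt
  exact e ▸ h

lemma norm_sub_sq_eq_sum {d : ℕ} (x z : Euc d) : ‖x - z‖ ^ 2 = ∑ j, (x j - z j) ^ 2 := by
  simp [EuclideanSpace.norm_sq_eq]

/-! ### A Carleman inequality -/

/-- Integrated commutator bound behind the Carleman estimate with a quadratic weight. -/
lemma integral_commutator_le {d : ℕ} (z : Euc d) (τ : ℝ) {f : Euc d → ℝ} (hf : ContDiff ℝ 2 f)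
    (hc : HasCompactSupport f) :
    ∫ x, (4 * τ * ∑ i, (pd f i x) ^ 2 + 4 * τ ^ 3 * (∑ j, (x j - z j) ^ 2) * f x ^ 2) ≤
    ∫ x, ((∑ i, pd2 f i i x) + τ ^ 2 * (∑ j, (x j - z j) ^ 2) * f x
      - τ * (2 * (∑ j, (x j - z j) * pd f j x) + d * f x)) ^ 2 := by
  have hp : ∀ i, ContDiff ℝ 1 (pd f i) := hf.pd (by norm_num)
  have hpc : ∀ i, HasCompactSupport (pd f i) := hc.pd
  have hf1 : ContDiff ℝ 1 f := hf.of_le (by norm_num)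
  have hX : ∀ j, ContDiff ℝ 1 (fun y : Euc d => y j - z j) := fun j => by fun_prop
  let G : Fin d → Euc d → ℝ := fun i x =>
    2 * (pd f i x * ∑ j, (x j - z j) * pd f j x) - (x i - z i) * ∑ j, pd f j x * pd f j x
      + d * (f x * pd f i x) + τ ^ 2 * ((∑ j, (x j - z j) * (x j - z j)) * (x i - z i) * (f x * f x))
  have hG : ∀ i, ContDiff ℝ 1 (G i) := by
    intro i; fun_prop
  have hGc : ∀ i, HasCompactSupport (G i) := by
    intro i
    refine HasCompactSupport.intro hc.isCompact fun x hx => ?_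
    have h0 : f x = 0 := image_eq_zero_of_notMem_tsupport hx
    have h1 : ∀ j, pd f j x = 0 := fun j => by
      have : fderiv ℝ f x = 0 := image_eq_zero_of_notMem_tsupport
        (fun h => hx (tsupport_fderiv_subset ℝ h))
      simp [pd, this]
    simp [G, h0, h1]
  have hGpd : ∀ i x, pd (G i) i x =
      2 * (pd2 f i i x * (∑ j, (x j - z j) * pd f j x)
        + pd f i x * (pd f i x + ∑ j, (x j - z j) * pd2 f i j x))
      - (∑ j, pd f j x ^ 2 + (x i - z i) * ∑ j, 2 * (pd f j x * pd2 f i j x))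
      + d * (pd f i x ^ 2 + f x * pd2 f i i x)
      + τ ^ 2 * (2 * (x i - z i) ^ 2 * f x ^ 2 + (∑ j, (x j - z j) ^ 2) * f x ^ 2
        + (∑ j, (x j - z j) ^ 2) * (x i - z i) * (2 * f x * pd f i x)) := by
    intro i x
    have dX := fun j => hasLineDerivAt_coord_sub z i j x
    have dp := fun j => ((hp j).differentiable (by norm_num) x).hasLineDerivAt_pd i
    have df := (hf1.differentiable (by norm_num) x).hasLineDerivAt_pd i
    unfold HasLineDerivAt at dX dp df
    refine HasLineDerivAt.pd_eq ?_ ((hG i).differentiable (by norm_num) x)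
    have H := ((((dp i).mul (HasDerivAt.fun_sum (u := Finset.univ)
      fun j _ => (dX j).mul (dp j))).const_mul 2).sub
      ((dX i).mul (HasDerivAt.fun_sum (u := Finset.univ) fun j _ => (dp j).mul (dp j)))).add
      ((df.mul (dp i)).const_mul (d : ℝ)) |>.add
      ((((HasDerivAt.fun_sum (u := Finset.univ) fun j _ => (dX j).mul (dX j)).mul (dX i)).mul
        (df.mul df)).const_mul (τ ^ 2))
    refine H.congr_deriv ?_
    have e2 : ∀ j, pd (pd f j) i x = pd2 f i j x := fun j => rfl
    simp only [zero_smul, add_zero, e2, Finset.sum_add_distrib, ite_mul, mul_ite, one_mul, zero_mul,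
      mul_one, mul_zero, Finset.sum_ite_eq', Finset.mem_univ, if_true, ← sq, Pi.mul_apply]
    have e3 : ∀ j, pd2 f i j x * pd f j x + pd f j x * pd2 f i j x
      = 2 * (pd f j x * pd2 f i j x) := fun j => by ring
    simp only [← Finset.sum_add_distrib, e3]
    ring
  have hdiv : ∫ x, ∑ i, pd (G i) i x = 0 := by
    rw [integral_finsetSum]
    · exact Finset.sum_eq_zero fun i _ => integral_pd_eq_zero (hG i) (hGc i) i
    · intro i _
      exact ((hG i).pd (m := 0) (by norm_num) i).continuous.integrable_of_hasCompactSupport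
        ((hGc i).pd i)
  have hsum : ∀ x, ∑ i, pd (G i) i x =
      ((∑ i, pd2 f i i x) + τ ^ 2 * (∑ j, (x j - z j) ^ 2) * f x) *
        (2 * (∑ j, (x j - z j) * pd f j x) + d * f x)
      + 2 * ∑ i, (pd f i x) ^ 2 + 2 * τ ^ 2 * (∑ j, (x j - z j) ^ 2) * f x ^ 2 := by
    intro x
    have hsym : ∑ i, (x i - z i) * (2 * ∑ j, pd f j x * pd2 f i j x)
        = 2 * ∑ i, pd f i x * ∑ j, (x j - z j) * pd2 f i j x := by
      simp only [Finset.mul_sum]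
      rw [Finset.sum_comm]
      refine Finset.sum_congr rfl fun i _ => Finset.sum_congr rfl fun j _ => ?_
      rw [pd2_comm hf j i]; ring
    simp only [hGpd, Finset.sum_add_distrib, Finset.sum_sub_distrib, mul_add,
      ← Finset.mul_sum, ← Finset.sum_mul, Finset.sum_const, Finset.card_univ, Fintype.card_fin,
      nsmul_eq_mul, ← sq]
    have e4 : ∑ i, (∑ j, (x j - z j) ^ 2) * (x i - z i) * (2 * f x * pd f i x)
        = (∑ j, (x j - z j) ^ 2) * (2 * f x) * ∑ i, (x i - z i) * pd f i x := by
      rw [Finset.mul_sum]; exact Finset.sum_congr rfl fun i _ => by ring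
    rw [e4, hsym]
    ring
  have hdiv' : ∫ x, (-2 * τ) * ∑ i, pd (G i) i x = 0 := by
    rw [integral_const_mul, hdiv, mul_zero]
  have hcsum : Continuous fun x => ∑ i, pd (G i) i x :=
    continuous_finsetSum _ fun i _ => ((hG i).pd (m := 0) (by norm_num) i).continuous
  have hfc := hf.continuous
  have hpcont : ∀ i, Continuous (pd f i) := fun i => (hp i).continuous
  have hp2cont : ∀ i j, Continuous (pd2 f i j) := hf.continuous_pd2
  have vanish : ∀ x, x ∉ tsupport f → f x = 0 ∧ (∀ j, pd f j x = 0) ∧ ∀ i j, pd2 f i j x = 0 := by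
    intro x hx
    have h : f =ᶠ[nhds x] fun _ => 0 := notMem_tsupport_iff_eventuallyEq.1 hx
    refine ⟨h.self_of_nhds, fun j => ?_, fun i j => ?_⟩
    · rw [h.pd_eq]; simp [pd]
    · rw [h.pd2_eq]; simp [pd2, pd]
  have hcI : Continuous fun x => 4 * τ * ∑ i, (pd f i x) ^ 2
      + 4 * τ ^ 3 * (∑ j, (x j - z j) ^ 2) * f x ^ 2 := by fun_prop
  have hI : Integrable fun x => 4 * τ * ∑ i, (pd f i x) ^ 2
      + 4 * τ ^ 3 * (∑ j, (x j - z j) ^ 2) * f x ^ 2 := by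
    refine hcI.integrable_of_hasCompactSupport (HasCompactSupport.intro hc.isCompact fun x hx => ?_)
    simp [(vanish x hx).1, (vanish x hx).2.1]
  have hI2 : Integrable fun x => (-2 * τ) * ∑ i, pd (G i) i x := by
    refine (continuous_const.mul hcsum).integrable_of_hasCompactSupport
      (HasCompactSupport.intro hc.isCompact fun x hx => ?_)
    simp [hsum, (vanish x hx).1, (vanish x hx).2.1]
  rw [← add_zero (∫ x, (4 * τ * _ + _)), ← hdiv', ← integral_add hI hI2]
  refine integral_mono (hI.add hI2) ?_ fun x => ?_
  · refine Continuous.integrable_of_hasCompactSupport (by fun_prop)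
      (HasCompactSupport.intro hc.isCompact fun x hx => ?_)
    simp [(vanish x hx).1, (vanish x hx).2.1, (vanish x hx).2.2]
  · simp only [hsum]
    nlinarith [sq_nonneg ((∑ i, pd2 f i i x) + τ ^ 2 * (∑ j, (x j - z j) ^ 2) * f x),
      sq_nonneg (τ * (2 * (∑ j, (x j - z j) * pd f j x) + d * f x))]

/-- **Carleman inequality** with weight `exp (τ * |x - z|²)`. -/
lemma carleman {d : ℕ} (z : Euc d) {τ : ℝ} (hτ : 0 ≤ τ) {v : Euc d → ℝ} (hv : ContDiff ℝ 2 v)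
    (hc : HasCompactSupport v) :
    ∫ x, Real.exp (τ * ‖x - z‖ ^ 2) *
        (τ * ∑ i, (pd v i x) ^ 2 + 2 * τ ^ 3 * ‖x - z‖ ^ 2 * v x ^ 2) ≤
      ∫ x, Real.exp (τ * ‖x - z‖ ^ 2) * (∑ i, pd2 v i i x) ^ 2 := by
  let E : Euc d → ℝ := fun x => Real.exp (τ / 2 * ∑ j, (x j - z j) * (x j - z j))
  have hE : ContDiff ℝ 2 E := by
    have : ∀ j, ContDiff ℝ 2 (fun y : Euc d => y j - z j) := fun j => by fun_prop
    fun_prop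
  have hEsq : ∀ x, Real.exp (τ * ‖x - z‖ ^ 2) = E x ^ 2 := by
    intro x
    simp only [E]
    rw [← Real.exp_nat_mul, norm_sub_sq_eq_sum]
    simp only [← sq]
    congr 1; push_cast; ring
  let f : Euc d → ℝ := fun x => E x * v x
  have hf : ContDiff ℝ 2 f := hE.mul hv
  have hfc : HasCompactSupport f := hc.mul_left
  have hv1 : ∀ i, ContDiff ℝ 1 (pd v i) := hv.pd (by norm_num)
  have dE : ∀ i x, HasLineDerivAt ℝ E (E x * (τ * (x i - z i))) x (EuclideanSpace.single i 1) := by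
    intro i x
    have dX := fun j => hasLineDerivAt_coord_sub z i j x
    unfold HasLineDerivAt at dX ⊢
    have H := ((HasDerivAt.fun_sum (u := Finset.univ) fun j _ =>
      (dX j).mul (dX j)).const_mul (τ / 2)).exp
    refine H.congr_deriv ?_
    simp only [zero_smul, add_zero, Finset.sum_add_distrib, ite_mul, mul_ite, one_mul, zero_mul,
      mul_one, mul_zero, Finset.sum_ite_eq', Finset.mem_univ, if_true, Pi.mul_apply, E]
    ring
  have hpf : ∀ i, pd f i = fun x => E x * (pd v i x + τ * (x i - z i) * v x) := by
    intro i
    ext x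
    have h1 := dE i x
    have h2 := (hv.differentiable (by norm_num) x).hasLineDerivAt_pd i
    refine HasLineDerivAt.pd_eq ?_ (hf.differentiable (by norm_num) x)
    unfold HasLineDerivAt at h1 h2 ⊢
    refine (h1.mul h2).congr_deriv ?_
    simp only [zero_smul, add_zero]
    ring
  have hpf2 : ∀ i x, pd2 f i i x = E x * (pd2 v i i x + 2 * τ * (x i - z i) * pd v i x
      + τ * v x + τ ^ 2 * (x i - z i) ^ 2 * v x) := by
    intro i x
    have h1 := dE i x
    have h2 := (hv.differentiable (by norm_num) x).hasLineDerivAt_pd i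
    have h3 := ((hv1 i).differentiable (by norm_num) x).hasLineDerivAt_pd i
    have h4 := hasLineDerivAt_coord_sub z i i x
    have hd : DifferentiableAt ℝ (pd f i) x :=
      (hf.pd (m := 1) (by norm_num) i).differentiable (by norm_num) x
    refine HasLineDerivAt.pd_eq (f := pd f i) ?_ hd
    rw [hpf]
    unfold HasLineDerivAt at h1 h2 h3 h4 ⊢
    refine (h1.mul (h3.add ((h4.const_mul τ).mul h2))).congr_deriv ?_
    have e2 : pd (pd v i) i x = pd2 v i i x := rfl
    simp only [zero_smul, add_zero, e2, if_true, Pi.add_apply, Pi.mul_apply]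
    ring
  have hmain := integral_commutator_le z τ hf hfc
  have hrhs : ∀ x, ((∑ i, pd2 f i i x) + τ ^ 2 * (∑ j, (x j - z j) ^ 2) * f x
      - τ * (2 * (∑ j, (x j - z j) * pd f j x) + d * f x)) ^ 2
      = Real.exp (τ * ‖x - z‖ ^ 2) * (∑ i, pd2 v i i x) ^ 2 := by
    intro x
    rw [hEsq, ← mul_pow]
    congr 1
    have e1 : ∑ i, pd2 f i i x = E x * (∑ i, pd2 v i i x + 2 * τ * (∑ i, (x i - z i) * pd v i x)
        + τ * d * v x + τ ^ 2 * (∑ i, (x i - z i) ^ 2) * v x) := by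
      have : (τ * d * v x : ℝ) = ∑ _i : Fin d, τ * v x := by simp; ring
      rw [this, Finset.mul_sum, Finset.mul_sum, Finset.sum_mul, ← Finset.sum_add_distrib,
        ← Finset.sum_add_distrib, ← Finset.sum_add_distrib, Finset.mul_sum]
      exact Finset.sum_congr rfl fun i _ => by rw [hpf2]; ring
    have e2 : ∑ j, (x j - z j) * pd f j x = E x * (∑ j, (x j - z j) * pd v j x
        + τ * (∑ i, (x i - z i) ^ 2) * v x) := by
      rw [Finset.mul_sum, Finset.sum_mul, ← Finset.sum_add_distrib, Finset.mul_sum]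
      exact Finset.sum_congr rfl fun i _ => by rw [hpf]; ring
    rw [e1, e2]
    simp only [f]
    ring
  simp only [hrhs] at hmain
  refine le_trans (integral_mono ?_ ?_ fun x => ?_) hmain
  · have := fun i => (hv1 i).continuous
    have := hv.continuous
    refine Continuous.integrable_of_hasCompactSupport (by fun_prop)
      (HasCompactSupport.intro hc.isCompact fun x hx => ?_)
    have h : v =ᶠ[nhds x] fun _ => 0 := notMem_tsupport_iff_eventuallyEq.1 hx
    have h1 : ∀ j, pd v j x = 0 := fun j => by rw [h.pd_eq]; simp [pd]
    simp [h1, h.self_of_nhds]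
  · have := fun i => (hf.pd (m := 1) (by norm_num) i).continuous
    have := hf.continuous
    refine Continuous.integrable_of_hasCompactSupport (by fun_prop)
      (HasCompactSupport.intro hfc.isCompact fun x hx => ?_)
    have h : f =ᶠ[nhds x] fun _ => 0 := notMem_tsupport_iff_eventuallyEq.1 hx
    have h1 : ∀ j, pd f j x = 0 := fun j => by rw [h.pd_eq]; simp [pd]
    simp [h1, h.self_of_nhds]
  · simp only [hEsq]
    simp only [norm_sub_sq_eq_sum, hpf, f]
    have : E x ^ 2 * (τ * ∑ i, pd v i x ^ 2 + 2 * τ ^ 3 * (∑ j, (x j - z j) ^ 2) * v x ^ 2)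
        = ∑ i, E x ^ 2 * (τ * pd v i x ^ 2 + 2 * τ ^ 3 * (x i - z i) ^ 2 * v x ^ 2) := by
      simp only [Finset.mul_sum, Finset.sum_mul, Finset.sum_add_distrib, mul_add]
    rw [this]
    have : 4 * τ * ∑ i, (E x * (pd v i x + τ * (x i - z i) * v x)) ^ 2
        + 4 * τ ^ 3 * (∑ j, (x j - z j) ^ 2) * (E x * v x) ^ 2
        = ∑ i, E x ^ 2 * (4 * τ * (pd v i x + τ * (x i - z i) * v x) ^ 2
          + 4 * τ ^ 3 * (x i - z i) ^ 2 * v x ^ 2) := by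
      simp only [Finset.mul_sum, Finset.sum_mul]
      rw [← Finset.sum_add_distrib]
      exact Finset.sum_congr rfl fun i _ => by ring
    rw [this]
    refine Finset.sum_le_sum fun i _ => mul_le_mul_of_nonneg_left ?_ (sq_nonneg _)
    have h0 : 0 ≤ τ * (pd v i x + 2 * (τ * (x i - z i) * v x)) ^ 2 :=
      mul_nonneg hτ (sq_nonneg _)
    have h1 : 0 ≤ τ * (pd v i x + τ * (x i - z i) * v x) ^ 2 :=
      mul_nonneg hτ (sq_nonneg _)
    nlinarith [h0, h1]

/-! ### Unique continuation from infinity -/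

lemma eq_zero_of_sq_laplacian_le {d : ℕ} (z : Euc d) {A ρ : ℝ} (hρ : 0 < ρ)
    {v : Euc d → ℝ} (hv : ContDiff ℝ 2 v) (hc : HasCompactSupport v)
    (hL : ∀ x, ρ ≤ ‖x - z‖ → (∑ i, pd2 v i i x) ^ 2 ≤ A * ((∑ i, pd v i x ^ 2) + v x ^ 2)) :
    ∀ x, ρ < ‖x - z‖ → v x = 0 := by
  intro x₀ hx₀
  by_contra hne
  obtain ⟨σ, h23, h30⟩ := exists_between hx₀
  have hvc := hv.continuous
  have hpc : ∀ i, Continuous (pd v i) := fun i => (hv.pd (m := 1) (by norm_num) i).continuous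
  have hp2c := fun i => hv.continuous_pd2 i i
  have vanish : ∀ x, x ∉ tsupport v → v x = 0 ∧ (∀ j, pd v j x = 0) ∧ ∀ i j, pd2 v i j x = 0 := by
    intro x hx
    have h : v =ᶠ[nhds x] fun _ => 0 := notMem_tsupport_iff_eventuallyEq.1 hx
    refine ⟨h.self_of_nhds, fun j => ?_, fun i j => ?_⟩
    · rw [h.pd_eq]; simp [pd]
    · rw [h.pd2_eq]; simp [pd2, pd]
  let S : Set (Euc d) := {x | σ < ‖x - z‖}
  have hS : IsOpen S := isOpen_lt continuous_const (by fun_prop)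
  have hv2 : Integrable fun x => v x ^ 2 :=
    Continuous.integrable_of_hasCompactSupport (by fun_prop)
      (HasCompactSupport.intro hc.isCompact fun x hx => by simp [(vanish x hx).1])
  have hcpos : 0 < ∫ x in S, v x ^ 2 := by
    rw [setIntegral_pos_iff_support_of_nonneg_ae (ae_of_all _ fun x => sq_nonneg _)
      hv2.integrableOn]
    have : IsOpen ((Function.support fun x => v x ^ 2) ∩ S) :=
      (isOpen_compl_singleton.preimage (by fun_prop : Continuous fun x => v x ^ 2)).inter hS
    exact this.measure_pos _ ⟨x₀, by simpa using hne, h30⟩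
  let K := ∫ x, (∑ i, pd2 v i i x) ^ 2
  have hKint : Integrable fun x => (∑ i, pd2 v i i x) ^ 2 :=
    Continuous.integrable_of_hasCompactSupport (by fun_prop)
      (HasCompactSupport.intro hc.isCompact fun x hx => by simp [(vanish x hx).2.2])
  have key : ∀ τ : ℝ, 1 ≤ τ → 2 * A ≤ τ → A ≤ τ * ρ ^ 2 →
      Real.exp (τ * (σ ^ 2 - ρ ^ 2)) * (ρ ^ 2 * ∫ x in S, v x ^ 2) ≤ K := by
    intro τ h1 h2 h3
    have hτ0 : 0 < τ := by linarith
    have hcar := carleman z hτ0.le hv hc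
    have hiL : Integrable fun x => Real.exp (τ * ‖x - z‖ ^ 2) *
        (τ * ∑ i, (pd v i x) ^ 2 + 2 * τ ^ 3 * ‖x - z‖ ^ 2 * v x ^ 2) :=
      Continuous.integrable_of_hasCompactSupport (by fun_prop)
        (HasCompactSupport.intro hc.isCompact fun x hx => by
          simp [(vanish x hx).1, (vanish x hx).2.1])
    have hiR : Integrable fun x => Real.exp (τ * ‖x - z‖ ^ 2) * (∑ i, pd2 v i i x) ^ 2 :=
      Continuous.integrable_of_hasCompactSupport (by fun_prop)
        (HasCompactSupport.intro hc.isCompact fun x hx => by simp [(vanish x hx).2.2])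
    have hbound : ∫ x, Real.exp (τ * ‖x - z‖ ^ 2) * (∑ i, pd2 v i i x) ^ 2 ≤
        ∫ x, (1 / 2 * (Real.exp (τ * ‖x - z‖ ^ 2) *
        (τ * ∑ i, (pd v i x) ^ 2 + 2 * τ ^ 3 * ‖x - z‖ ^ 2 * v x ^ 2))
        + Real.exp (τ * ρ ^ 2) * (∑ i, pd2 v i i x) ^ 2) := by
      refine integral_mono hiR ((hiL.const_mul _).add (hKint.const_mul _)) fun x => ?_
      have hg0 : 0 ≤ ∑ i, pd v i x ^ 2 := Finset.sum_nonneg fun i _ => sq_nonneg _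
      by_cases hx : ρ ≤ ‖x - z‖
      · have hsq : ρ ^ 2 ≤ ‖x - z‖ ^ 2 := by gcongr
        have h4 : A ≤ τ ^ 3 * ‖x - z‖ ^ 2 := by
          calc A ≤ τ * ρ ^ 2 := h3
            _ ≤ τ ^ 3 * ‖x - z‖ ^ 2 := by
              gcongr
              exact le_self_pow₀ h1 (by norm_num)
        have h5 : A * ((∑ i, pd v i x ^ 2) + v x ^ 2) ≤
            1 / 2 * (τ * ∑ i, (pd v i x) ^ 2 + 2 * τ ^ 3 * ‖x - z‖ ^ 2 * v x ^ 2) := by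
          nlinarith [mul_le_mul_of_nonneg_right h2 hg0, mul_le_mul_of_nonneg_right h4 (sq_nonneg (v x))]
        have h6 := mul_le_mul_of_nonneg_left ((hL x hx).trans h5) (Real.exp_pos (τ * ‖x - z‖ ^ 2)).le
        have h7 : 0 ≤ Real.exp (τ * ρ ^ 2) * (∑ i, pd2 v i i x) ^ 2 := by positivity
        simp only at *
        linarith
      · have h8 : Real.exp (τ * ‖x - z‖ ^ 2) ≤ Real.exp (τ * ρ ^ 2) := by
          gcongr; exact (not_le.1 hx).le
        have h9 := mul_le_mul_of_nonneg_right h8 (sq_nonneg (∑ i, pd2 v i i x))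
        have : 0 ≤ 1 / 2 * (Real.exp (τ * ‖x - z‖ ^ 2) *
          (τ * ∑ i, (pd v i x) ^ 2 + 2 * τ ^ 3 * ‖x - z‖ ^ 2 * v x ^ 2)) := by positivity
        simp only at *
        linarith
    rw [integral_add (hiL.const_mul _) (hKint.const_mul _), integral_const_mul,
      integral_const_mul] at hbound
    have hhalf : 1 / 2 * ∫ x, Real.exp (τ * ‖x - z‖ ^ 2) *
        (τ * ∑ i, (pd v i x) ^ 2 + 2 * τ ^ 3 * ‖x - z‖ ^ 2 * v x ^ 2)
        ≤ Real.exp (τ * ρ ^ 2) * K := by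
      simp only [K]; linarith
    have hlow : Real.exp (τ * σ ^ 2) * (2 * ρ ^ 2) * (∫ x in S, v x ^ 2) ≤
        ∫ x, Real.exp (τ * ‖x - z‖ ^ 2) *
        (τ * ∑ i, (pd v i x) ^ 2 + 2 * τ ^ 3 * ‖x - z‖ ^ 2 * v x ^ 2) := by
      rw [← integral_const_mul]
      refine le_trans (setIntegral_mono_on (hv2.integrableOn.const_mul _) hiL.integrableOn
        hS.measurableSet fun x hx => ?_) (setIntegral_le_integral hiL (ae_of_all _ fun x => ?_))
      · have hx' : σ < ‖x - z‖ := hx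
        have hg0 : 0 ≤ τ * ∑ i, pd v i x ^ 2 :=
          mul_nonneg hτ0.le (Finset.sum_nonneg fun i _ => sq_nonneg _)
        have e1 : Real.exp (τ * σ ^ 2) ≤ Real.exp (τ * ‖x - z‖ ^ 2) := by
          have : 0 < σ := by linarith
          gcongr
        have e2 : 2 * ρ ^ 2 * v x ^ 2 ≤
            τ * ∑ i, (pd v i x) ^ 2 + 2 * τ ^ 3 * ‖x - z‖ ^ 2 * v x ^ 2 := by
          have : 2 * ρ ^ 2 * v x ^ 2 ≤ 2 * τ ^ 3 * ‖x - z‖ ^ 2 * v x ^ 2 := by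
            have h10 : 1 ≤ τ ^ 3 := one_le_pow₀ h1
            have h11 : ρ ^ 2 ≤ ‖x - z‖ ^ 2 := by gcongr; linarith
            have h12 : 1 * ρ ^ 2 ≤ τ ^ 3 * ‖x - z‖ ^ 2 := by gcongr
            nlinarith [mul_le_mul_of_nonneg_right h12 (sq_nonneg (v x))]
          linarith
        rw [mul_assoc]
        exact mul_le_mul e1 e2 (by positivity) (Real.exp_pos _).le
      · positivity
    have e3 : Real.exp (τ * σ ^ 2) = Real.exp (τ * (σ ^ 2 - ρ ^ 2)) * Real.exp (τ * ρ ^ 2) := by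
      rw [← Real.exp_add]; congr 1; ring
    rw [e3] at hlow
    refine le_of_mul_le_mul_left ?_ (Real.exp_pos (τ * ρ ^ 2))
    linarith
  have hgap : 0 < σ ^ 2 - ρ ^ 2 := by nlinarith
  have hlim : Tendsto (fun τ : ℝ => Real.exp (τ * (σ ^ 2 - ρ ^ 2)) *
      (ρ ^ 2 * ∫ x in S, v x ^ 2)) atTop atTop :=
    (Real.tendsto_exp_atTop.comp (tendsto_id.atTop_mul_const hgap)).atTop_mul_const
      (mul_pos (by positivity) hcpos)
  obtain ⟨τ, h0, h1, h2, h3⟩ := ((hlim.eventually_gt_atTop K).and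
    ((eventually_ge_atTop 1).and ((eventually_ge_atTop (2 * A)).and
      (eventually_ge_atTop (A / ρ ^ 2))))).exists
  exact absurd (key τ h1 h2 ((div_le_iff₀ (by positivity)).1 h3)) (not_le.2 h0)

/-! ### Comparison principle -/

lemma nonneg_of_isLocalMin_of_hasDerivAt {φ φ' : ℝ → ℝ} {a : ℝ} (hmin : IsLocalMin φ 0)
    (h1 : ∀ t, HasDerivAt φ (φ' t) t) (h2 : HasDerivAt φ' a 0) : 0 ≤ a := by
  by_contra ha
  have hd : deriv (fun t => -φ t) = fun t => -φ' t := funext fun t => (h1 t).neg.deriv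
  have hmax : IsLocalMin (fun t => -φ t) 0 := by
    refine isLocalMin_of_deriv_deriv_pos ?_ ?_ (h1 0).neg.continuousAt
    · rw [hd, h2.fun_neg.deriv]; linarith
    · rw [hd]
      simp [hmin.hasDerivAt_eq_zero (h1 0)]
  have hconst : φ =ᶠ[nhds 0] fun _ => φ 0 := by
    filter_upwards [hmin, hmax] with t h3 h4
    linarith
  have hzero : φ' =ᶠ[nhds 0] fun _ => 0 := by
    filter_upwards [hconst.eventuallyEq_nhds] with t ht
    exact (h1 t).unique ((hasDerivAt_const t (φ 0)).congr_of_eventuallyEq ht)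
  exact ha ((h2.unique ((hasDerivAt_const _ _).congr_of_eventuallyEq hzero)).ge)

/-- `w₂ i` is the second partial derivative of `w` along the `i`-th coordinate line. -/
def HasSecondPartials {d : ℕ} (w : Euc d → ℝ) (w₂ : Fin d → Euc d → ℝ) : Prop :=
  ∃ w₁ : Fin d → Euc d → ℝ, ∀ i x,
    HasLineDerivAt ℝ w (w₁ i x) x (EuclideanSpace.single i 1) ∧
    HasLineDerivAt ℝ (w₁ i) (w₂ i x) x (EuclideanSpace.single i 1)

lemma HasSecondPartials.sum_nonneg_of_isLocalMin {d : ℕ} {w : Euc d → ℝ}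
    {w₂ : Fin d → Euc d → ℝ} (hw : HasSecondPartials w w₂) {x : Euc d} (hx : IsLocalMin w x) :
    0 ≤ ∑ i, w₂ i x := by
  obtain ⟨w₁, h⟩ := hw
  refine Finset.sum_nonneg fun i _ => ?_
  refine nonneg_of_isLocalMin_of_hasDerivAt
    (φ := fun t => w (x + t • EuclideanSpace.single i 1))
    (φ' := fun t => w₁ i (x + t • EuclideanSpace.single i 1)) ?_ (fun t => ?_) (h i x).2
  · have hc : Continuous fun t : ℝ => x + t • EuclideanSpace.single i (1 : ℝ) := by fun_prop
    have ht : Tendsto (fun t : ℝ => x + t • EuclideanSpace.single i (1 : ℝ)) (nhds 0) (nhds x) := by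
      simpa using hc.tendsto 0
    have := ht.eventually hx
    simpa [IsLocalMin, IsMinFilter] using this
  · have := (h i (x + t • EuclideanSpace.single i 1)).1
    unfold HasLineDerivAt at this
    have h2 := HasDerivAt.comp_sub_const (𝕜 := ℝ) t t (by simpa using this)
    refine h2.congr_of_eventuallyEq (Eventually.of_forall fun s => ?_)
    simp only [add_assoc, ← add_smul]
    congr 3
    ring

lemma HasSecondPartials.sub {d : ℕ} {w h : Euc d → ℝ} {w₂ h₂ : Fin d → Euc d → ℝ}
    (hw : HasSecondPartials w w₂) (hh : HasSecondPartials h h₂) :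
    HasSecondPartials (fun x => w x - h x) (fun i x => w₂ i x - h₂ i x) := by
  obtain ⟨w₁, hw⟩ := hw
  obtain ⟨h₁, hh⟩ := hh
  exact ⟨fun i x => w₁ i x - h₁ i x, fun i x =>
    ⟨HasDerivAt.sub (hw i x).1 (hh i x).1, HasDerivAt.sub (hw i x).2 (hh i x).2⟩⟩

lemma HasSecondPartials.const_mul_sub {d : ℕ} {w : Euc d → ℝ} {w₂ : Fin d → Euc d → ℝ}
    (hw : HasSecondPartials w w₂) (A B : ℝ) :
    HasSecondPartials (fun x => A * w x - B) (fun i x => A * w₂ i x) := by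
  obtain ⟨w₁, hw⟩ := hw
  exact ⟨fun i x => A * w₁ i x, fun i x =>
    ⟨(HasDerivAt.const_mul A (hw i x).1).sub_const B, HasDerivAt.const_mul A (hw i x).2⟩⟩

/-- Weak comparison between a supersolution `w` and a strict subsolution `h` of `Δ - c`. -/
lemma comparison {d : ℕ} {K : Set (Euc d)} (hK : IsCompact K) {c : ℝ} (hc : 0 ≤ c)
    {w h : Euc d → ℝ} {w₂ h₂ : Fin d → Euc d → ℝ} (hwc : Continuous w) (hhc : Continuous h)
    (hw : HasSecondPartials w w₂) (hh : HasSecondPartials h h₂)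
    (hcase : ∀ x ∈ K, h x ≤ w x ∨
      (K ∈ nhds x ∧ ∑ i, w₂ i x ≤ c * w x ∧ c * h x < ∑ i, h₂ i x)) :
    ∀ x ∈ K, h x ≤ w x := by
  intro x hx
  obtain ⟨m, hm, hmin⟩ := hK.exists_isMinOn ⟨x, hx⟩ (hwc.sub hhc).continuousOn
  have hle : w m - h m ≤ w x - h x := hmin hx
  rcases hcase m hm with h0 | ⟨hn, h1, h2⟩
  · linarith
  · by_contra hneg
    have hlt : w m - h m ≤ 0 := by linarith
    have := (hw.sub hh).sum_nonneg_of_isLocalMin (hmin.isLocalMin hn)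
    rw [Finset.sum_sub_distrib] at this
    nlinarith

lemma hasLineDerivAt_norm_sub_sq {d : ℕ} (z : Euc d) (i : Fin d) (x : Euc d) :
    HasLineDerivAt ℝ (fun y : Euc d => ‖y - z‖ ^ 2) (2 * (x i - z i)) x
      (EuclideanSpace.single i 1) := by
  simp only [norm_sub_sq_eq_sum]
  have dX := fun j => hasLineDerivAt_coord_sub z i j x
  unfold HasLineDerivAt at dX ⊢
  refine (HasDerivAt.fun_sum (u := Finset.univ) fun j _ => (dX j).fun_pow 2).congr_deriv ?_
  simp

/-- Second partial derivatives of a radial function `H (|x - z|²)`. -/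
lemma hasSecondPartials_radial {d : ℕ} (z : Euc d) {H H₁ H₂ : ℝ → ℝ}
    (h1 : ∀ s, 0 ≤ s → HasDerivAt H (H₁ s) s) (h2 : ∀ s, 0 ≤ s → HasDerivAt H₁ (H₂ s) s) :
    HasSecondPartials (fun x : Euc d => H (‖x - z‖ ^ 2))
      (fun i x => 4 * (x i - z i) ^ 2 * H₂ (‖x - z‖ ^ 2) + 2 * H₁ (‖x - z‖ ^ 2)) := by
  refine ⟨fun i x => H₁ (‖x - z‖ ^ 2) * (2 * (x i - z i)), fun i x => ?_⟩
  have hn := hasLineDerivAt_norm_sub_sq z i x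
  have hX := hasLineDerivAt_coord_sub z i i x
  unfold HasLineDerivAt at *
  have e : ‖x + (0 : ℝ) • EuclideanSpace.single i (1 : ℝ) - z‖ ^ 2 = ‖x - z‖ ^ 2 := by simp
  refine ⟨HasDerivAt.comp (h₂ := H) 0 (by rw [e]; exact h1 _ (sq_nonneg _)) hn, ?_⟩
  have hH₁ := HasDerivAt.comp (h₂ := H₁) (h₂' := H₂ (‖x - z‖ ^ 2)) 0
    (by beta_reduce; rw [e]; exact h2 _ (sq_nonneg _)) hn
  refine (hH₁.mul (hX.const_mul 2)).congr_deriv ?_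
  simp only [Function.comp_apply, e, if_true]
  simp
  ring

lemma sum_radial {d : ℕ} (z x : Euc d) (a b : ℝ) :
    ∑ i, (4 * (x i - z i) ^ 2 * a + 2 * b) = 4 * ‖x - z‖ ^ 2 * a + 2 * d * b := by
  rw [Finset.sum_add_distrib, ← Finset.sum_mul, ← Finset.mul_sum, norm_sub_sq_eq_sum]
  simp
  ring

/-! ### Averages over balls -/

lemma setIntegral_ball_eq {d : ℕ} {r : ℝ} (hr : 0 < r) (F : Euc d → ℝ) (x : Euc d) :
    ∫ y in ball x r, F y = ∫ y in closedBall (0 : Euc d) r, F (x + y) := by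
  have hsphere : (sphere (0 : Euc d) r : Set (Euc d)) =ᵐ[volume] (∅ : Set (Euc d)) :=
    ae_eq_empty.2 (Measure.addHaar_sphere_of_ne_zero _ _ hr.ne')
  have hae : (closedBall (0 : Euc d) r : Set (Euc d)) =ᵐ[volume] ball (0 : Euc d) r := by
    rw [← ball_union_sphere]
    exact union_ae_eq_left_of_ae_eq_empty hsphere
  rw [setIntegral_congr_set hae, ← (measurePreserving_add_left volume x).setIntegral_preimage_emb
    (Homeomorph.addLeft x).measurableEmbedding F (ball x r)]
  congr 2
  simp

lemma continuous_setIntegral_ball {d : ℕ} {F : Euc d → ℝ} (hF : Continuous F) {r : ℝ}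
    (hr : 0 < r) :
    Continuous fun x => ∫ y in ball x r, F y := by
  simp only [setIntegral_ball_eq hr]
  exact continuous_parametric_integral_of_continuous (f := fun x y => F (x + y))
    (by simp only [Function.uncurry_def]; fun_prop) (isCompact_closedBall _ _)

lemma hasLineDerivAt_setIntegral_ball {d : ℕ} {F : Euc d → ℝ} (hF : ContDiff ℝ 1 F) {r : ℝ}
    (hr : 0 < r) (i : Fin d) (x : Euc d) :
    HasLineDerivAt ℝ (fun x => ∫ y in ball x r, F y) (∫ y in ball x r, pd F i y) x
      (EuclideanSpace.single i 1) := by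
  have hpc : Continuous (pd F i) := (hF.pd (m := 0) (by norm_num) i).continuous
  simp only [setIntegral_ball_eq hr]
  unfold HasLineDerivAt
  obtain ⟨B, hB⟩ := (isCompact_closedBall x (r + 1)).exists_bound_of_continuousOn hpc.continuousOn
  have hfin : IsFiniteMeasure (volume.restrict (closedBall (0 : Euc d) r)) :=
    ⟨by simpa using (isCompact_closedBall (0 : Euc d) r).measure_lt_top⟩
  have := (hasDerivAt_integral_of_dominated_loc_of_deriv_le (𝕜 := ℝ)
    (μ := volume.restrict (closedBall (0 : Euc d) r)) (s := ball 0 1) (x₀ := 0)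
    (F := fun t y => F (x + t • EuclideanSpace.single i (1 : ℝ) + y))
    (F' := fun t y => pd F i (x + t • EuclideanSpace.single i (1 : ℝ) + y))
    (bound := fun _ => B) (ball_mem_nhds _ one_pos) ?_ ?_ ?_ ?_ (integrable_const _) ?_).2
  · simpa using this
  · exact Eventually.of_forall fun t => Continuous.aestronglyMeasurable
      (by have := hF.continuous; fun_prop)
  · exact ContinuousOn.integrableOn_compact (isCompact_closedBall _ _)
      (by have := hF.continuous; fun_prop)
  · exact Continuous.aestronglyMeasurable (by fun_prop)
  · refine (ae_restrict_iff' measurableSet_closedBall).2 (ae_of_all _ fun y hy t ht => hB _ ?_)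
    rw [mem_closedBall_zero_iff] at hy
    rw [mem_ball_zero_iff] at ht
    rw [mem_closedBall_iff_norm]
    calc ‖x + t • EuclideanSpace.single i (1 : ℝ) + y - x‖
        = ‖y + t • EuclideanSpace.single i (1 : ℝ)‖ := by congr 1; abel
      _ ≤ ‖y‖ + ‖t • EuclideanSpace.single i (1 : ℝ)‖ := norm_add_le _ _
      _ ≤ r + 1 := by
        rw [norm_smul]; simp only [PiLp.norm_single, norm_one, mul_one]; linarith
  · refine ae_of_all _ fun y t _ => ?_
    have h1 : HasFDerivAt F _ (x + t • EuclideanSpace.single i (1 : ℝ) + y) :=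
      (hF.differentiable (by norm_num) _).hasFDerivAt
    have h2 : HasDerivAt (fun t : ℝ => x + t • EuclideanSpace.single i (1 : ℝ) + y)
        (EuclideanSpace.single i (1 : ℝ)) t := by
      simpa using (((hasDerivAt_id t).smul_const (EuclideanSpace.single i (1 : ℝ))).const_add
        x).add_const y
    exact h1.comp_hasDerivAt t h2

lemma hasSecondPartials_setIntegral_ball {d : ℕ} {F : Euc d → ℝ} (hF : ContDiff ℝ 2 F) {r : ℝ}
    (hr : 0 < r) :
    HasSecondPartials (fun x => ∫ y in ball x r, F y) (fun i x => ∫ y in ball x r, pd2 F i i y) :=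
  ⟨fun i x => ∫ y in ball x r, pd F i y, fun i x =>
    ⟨hasLineDerivAt_setIntegral_ball (hF.of_le (by norm_num)) hr i x,
      hasLineDerivAt_setIntegral_ball (hF.pd (by norm_num) i) hr i x⟩⟩

/-! ### Strong maximum principle and decay of supersolutions in exterior domains -/

/-- Positivity of a nonnegative supersolution at the centre of a ball spreads to the whole ball. -/
lemma pos_on_ball_of_pos_center {d : ℕ} {c : ℝ} (hc : 0 ≤ c) {w : Euc d → ℝ}
    {w₂ : Fin d → Euc d → ℝ} (hwc : Continuous w) (hw : HasSecondPartials w w₂)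
    (hw0 : ∀ x, 0 ≤ w x) {p : Euc d} {η : ℝ}
    (hsup : ∀ x ∈ ball p η, ∑ i, w₂ i x ≤ c * w x) (hpos : 0 < w p) :
    ∀ x ∈ ball p η, 0 < w x := by
  intro x hx
  rw [mem_ball_iff_norm] at hx
  obtain ⟨η', hxη, hη⟩ := exists_between hx
  have hev : ∀ᶠ y in nhds p, w p / 2 < w y := hwc.continuousAt.eventually_const_lt (by linarith)
  obtain ⟨δ, hδ, hball⟩ := Metric.nhds_basis_closedBall.eventually_iff.1 hev
  by_cases hxδ : ‖x - p‖ ≤ δ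
  · have := hball (mem_closedBall_iff_norm.2 hxδ)
    linarith
  push Not at hxδ
  obtain ⟨α, hα1, hα2⟩ : ∃ α : ℝ, 1 ≤ α ∧ 2 * d + c + 1 ≤ 4 * α * δ ^ 2 := by
    refine ⟨max 1 ((2 * d + c + 1) / (4 * δ ^ 2)), le_max_left _ _, ?_⟩
    have := (div_le_iff₀ (by positivity)).1 (le_max_right 1 ((2 * d + c + 1) / (4 * δ ^ 2)))
    linarith
  set m := w p / 2 with hm
  have hm0 : 0 < m := by positivity
  let K : Set (Euc d) := {y | δ ≤ ‖y - p‖ ∧ ‖y - p‖ ≤ η'}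
  have hKc : IsCompact K := by
    refine (isCompact_closedBall p η').of_isClosed_subset ?_ fun y hy =>
      mem_closedBall_iff_norm.2 hy.2
    exact isClosed_Icc.preimage (f := fun y : Euc d => ‖y - p‖) (by fun_prop)
  have d1 : ∀ s : ℝ, HasDerivAt (fun s => Real.exp (-α * s)) (-α * Real.exp (-α * s)) s := by
    intro s
    refine ((hasDerivAt_id s).const_mul (-α)).exp.congr_deriv ?_
    simp; ring
  have d2 : ∀ s : ℝ, HasDerivAt (fun s => -α * Real.exp (-α * s))
      (α ^ 2 * Real.exp (-α * s)) s := fun s => ((d1 s).const_mul (-α)).congr_deriv (by ring)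
  have hrad := (hasSecondPartials_radial p (fun s _ => d1 s) (fun s _ => d2 s)).const_mul_sub m
    (m * Real.exp (-α * η' ^ 2))
  have hcomp := comparison hKc hc hwc (by fun_prop) hw hrad (fun y hy => ?_) x ⟨hxδ.le, hxη.le⟩
  · have : Real.exp (-α * η' ^ 2) < Real.exp (-α * ‖x - p‖ ^ 2) := by
      apply Real.exp_lt_exp.2
      have : ‖x - p‖ ^ 2 < η' ^ 2 := by gcongr
      nlinarith
    nlinarith
  · obtain ⟨hy1, hy2⟩ := hy
    have hEpos := Real.exp_pos (-α * ‖y - p‖ ^ 2)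
    have hE'pos := Real.exp_pos (-α * η' ^ 2)
    have hE1 : Real.exp (-α * ‖y - p‖ ^ 2) ≤ 1 := by
      apply Real.exp_le_one_iff.2
      nlinarith [sq_nonneg ‖y - p‖]
    rcases hy1.eq_or_lt with h1 | h1
    · left
      have := hball (mem_closedBall_iff_norm.2 h1.ge)
      nlinarith
    rcases hy2.eq_or_lt with h2 | h2
    · left
      rw [h2]
      linarith [hw0 y]
    right
    refine ⟨?_, hsup y (mem_ball_iff_norm.2 (h2.trans hη)), ?_⟩
    · have ho : IsOpen {y : Euc d | δ < ‖y - p‖ ∧ ‖y - p‖ < η'} :=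
        isOpen_Ioo.preimage (f := fun y : Euc d => ‖y - p‖) (by fun_prop)
      exact Filter.mem_of_superset (ho.mem_nhds ⟨h1, h2⟩) fun y hy => ⟨hy.1.le, hy.2.le⟩
    · rw [← Finset.mul_sum, sum_radial]
      have hsq : δ ^ 2 ≤ ‖y - p‖ ^ 2 := by gcongr
      have h3 : c + 1 ≤ 4 * ‖y - p‖ ^ 2 * α ^ 2 - 2 * d * α := by
        have h4 : 2 * d + c + 1 ≤ 4 * α * ‖y - p‖ ^ 2 := by nlinarith
        nlinarith
      have h5 : c * Real.exp (-α * ‖y - p‖ ^ 2) <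
          4 * ‖y - p‖ ^ 2 * (α ^ 2 * Real.exp (-α * ‖y - p‖ ^ 2))
            + 2 * d * (-α * Real.exp (-α * ‖y - p‖ ^ 2)) := by nlinarith
      have h6 := mul_lt_mul_of_pos_left h5 hm0
      have h7 : 0 ≤ c * (m * Real.exp (-α * η' ^ 2)) := by positivity
      linarith

lemma isPreconnected_lt_norm {d : ℕ} (hd : 2 ≤ d) {R : ℝ} (hR : 0 ≤ R) :
    IsPreconnected {x : Euc d | R < ‖x‖} := by
  have hrank : 1 < Module.rank ℝ (Euc d) := by
    rw [← Module.finrank_eq_rank, finrank_euclideanSpace_fin]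
    exact_mod_cast hd
  have := ((isPreconnected_sphere hrank (0 : Euc d) 1).prod (isPreconnected_Ioi (a := R))).image
    (fun p => p.2 • p.1) (by fun_prop)
  convert this using 1
  ext x
  simp only [mem_ofPred_eq, mem_image, mem_prod, mem_sphere_zero_iff_norm, mem_Ioi, Prod.exists]
  constructor
  · intro hx
    have h0 : ‖x‖ ≠ 0 := by linarith
    refine ⟨‖x‖⁻¹ • x, ‖x‖, ⟨?_, hx⟩, ?_⟩
    · rw [norm_smul, norm_inv, norm_norm, inv_mul_cancel₀ h0]
    · rw [smul_smul, mul_inv_cancel₀ h0, one_smul]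
  · rintro ⟨y, t, ⟨hy, ht⟩, rfl⟩
    rw [norm_smul, hy, mul_one, Real.norm_eq_abs]
    exact ht.trans_le (le_abs_self t)

/-- Strong maximum principle in the exterior of a ball. -/
lemma pos_of_exists_pos {d : ℕ} (hd : 2 ≤ d) {c R : ℝ} (hc : 0 ≤ c) (hR : 0 ≤ R) {w : Euc d → ℝ}
    {w₂ : Fin d → Euc d → ℝ} (hwc : Continuous w) (hw : HasSecondPartials w w₂)
    (hw0 : ∀ x, 0 ≤ w x) (hsup : ∀ x, R < ‖x‖ → ∑ i, w₂ i x ≤ c * w x)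
    (hpos : ∃ x, R < ‖x‖ ∧ 0 < w x) : ∀ x, R < ‖x‖ → 0 < w x := by
  have hΩ : IsOpen {x : Euc d | R < ‖x‖} := isOpen_lt continuous_const continuous_norm
  have hS : IsOpen {x : Euc d | 0 < w x} := isOpen_lt continuous_const hwc
  refine (isPreconnected_lt_norm hd hR).subset_of_closure_inter_subset hS hpos ?_
  rintro x ⟨hxc, hx⟩
  obtain ⟨ε, hε, hball⟩ := Metric.isOpen_iff.1 hΩ x hx
  obtain ⟨p, hp, hpx⟩ := Metric.mem_closure_iff.1 hxc (ε / 2) (by positivity)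
  refine pos_on_ball_of_pos_center hc hwc hw hw0 (p := p) (η := ε / 2) (fun y hy => ?_) hp x hpx
  refine hsup y (hball (mem_ball.2 ?_))
  rw [mem_ball] at hy
  have := dist_triangle y p x
  rw [dist_comm p x] at this
  linarith

/-- A positive supersolution of `Δ - c` in the exterior of a ball decays at most exponentially. -/
lemma exp_le_of_pos {d : ℕ} {c R : ℝ} (hc : 0 ≤ c) {w : Euc d → ℝ}
    {w₂ : Fin d → Euc d → ℝ} (hwc : Continuous w) (hw : HasSecondPartials w w₂)
    (hw0 : ∀ x, 0 ≤ w x) (hsup : ∀ x, R < ‖x‖ → ∑ i, w₂ i x ≤ c * w x)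
    (hpos : ∀ x, R < ‖x‖ → 0 < w x) :
    ∃ c₁ > 0, ∃ R₁, ∀ x : Euc d, R₁ ≤ ‖x‖ →
      c₁ * Real.exp (-((Real.sqrt c + 1) * ‖x‖)) ≤ w x := by
  set κ := Real.sqrt c + 1 with hκ
  have hsc := Real.sqrt_nonneg c
  have hκ1 : 1 ≤ κ := by linarith
  have hκc : c + 1 ≤ κ ^ 2 := by
    rw [hκ]; nlinarith [Real.sq_sqrt hc]
  let R₁ := max (R + 1) (κ ^ 2 + κ * d + 1)
  have hR₁ : R < R₁ := lt_of_lt_of_le (by linarith) (le_max_left _ _)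
  have hR₁' : κ ^ 2 + κ * d + 1 ≤ R₁ := le_max_right _ _
  obtain ⟨m, hm0, hm⟩ := (isCompact_sphere (0 : Euc d) R₁).exists_forall_le' hwc.continuousOn
    (a := 0) (fun x hx => hpos x (by rw [mem_sphere_zero_iff_norm] at hx; linarith))
  let S : ℝ → ℝ := fun s => Real.sqrt (1 + s)
  let H : ℝ → ℝ := fun s => Real.exp (-κ * S s)
  have hSpos : ∀ s, 0 ≤ s → 0 < S s := fun s hs => Real.sqrt_pos.2 (by linarith)
  have hSsq : ∀ s, 0 ≤ s → S s ^ 2 = 1 + s := fun s hs => Real.sq_sqrt (by linarith)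
  have dS : ∀ s, 0 ≤ s → HasDerivAt S (1 / (2 * S s)) s := fun s hs =>
    ((hasDerivAt_id s).const_add 1).sqrt (by simp; linarith)
  have dH : ∀ s, 0 ≤ s → HasDerivAt H (-κ / (2 * S s) * H s) s := fun s hs =>
    ((dS s hs).const_mul (-κ)).exp.congr_deriv (by simp only [H]; ring)
  have dH₁ : ∀ s, 0 ≤ s → HasDerivAt (fun s => -κ / (2 * S s) * H s)
      ((κ ^ 2 / (4 * S s ^ 2) + κ / (4 * S s ^ 3)) * H s) s := by
    intro s hs
    have hS0 := (hSpos s hs).ne'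
    refine (((hasDerivAt_const s (-κ)).div ((dS s hs).const_mul 2) (by positivity)).mul
      (dH s hs)).congr_deriv ?_
    simp only [Pi.div_apply]
    field_simp
    ring
  have hSnorm : ∀ x : Euc d, ‖x‖ ≤ S (‖x‖ ^ 2) ∧ S (‖x‖ ^ 2) ≤ ‖x‖ + 1 := by
    intro x
    refine ⟨Real.le_sqrt_of_sq_le (by linarith), Real.sqrt_le_iff.2 ⟨by positivity, ?_⟩⟩
    nlinarith [norm_nonneg x]
  have hHc : Continuous fun x : Euc d => H (‖x - 0‖ ^ 2) := by simp only [H, S]; fun_prop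
  have hH1 : ∀ s, 0 ≤ s → H s ≤ 1 := fun s hs => Real.exp_le_one_iff.2 (by nlinarith [hSpos s hs])
  refine ⟨m * Real.exp (-κ), by positivity, R₁, fun x hx => ?_⟩
  have hlow : m * H (‖x‖ ^ 2) ≤ w x := by
    refine le_of_forall_pos_le_add fun ε hε => ?_
    have hlim : Tendsto (fun t : ℝ => m * Real.exp (-(κ * t))) atTop (nhds (m * 0)) :=
      (Real.tendsto_exp_neg_atTop_nhds_zero.comp
        (tendsto_id.const_mul_atTop (by linarith : 0 < κ))).const_mul m
    rw [mul_zero] at hlim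
    obtain ⟨R₂, hR₂, hR₂x⟩ := ((hlim.eventually_lt_const hε).and (eventually_ge_atTop ‖x‖)).exists
    let K : Set (Euc d) := {y | R₁ ≤ ‖y‖ ∧ ‖y‖ ≤ R₂}
    have hKc : IsCompact K := by
      refine (isCompact_closedBall (0 : Euc d) R₂).of_isClosed_subset ?_ fun y hy =>
        mem_closedBall_zero_iff.2 hy.2
      exact isClosed_Icc.preimage continuous_norm
    have hrad := (hasSecondPartials_radial (0 : Euc d) dH dH₁).const_mul_sub m ε
    have hcomp := comparison hKc hc hwc (by fun_prop) hw hrad (fun y hy => ?_) x ⟨hx, hR₂x⟩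
    · simp only [sub_zero] at hcomp
      linarith
    · obtain ⟨hy1, hy2⟩ := hy
      have hHpos : 0 < H (‖y‖ ^ 2) := Real.exp_pos _
      rcases hy1.eq_or_lt with h1 | h1
      · left
        have := hm y (mem_sphere_zero_iff_norm.2 h1.symm)
        have := hH1 (‖y‖ ^ 2) (sq_nonneg _)
        simp only [sub_zero]
        nlinarith
      rcases hy2.eq_or_lt with h2 | h2
      · left
        have h3 : H (‖y‖ ^ 2) ≤ Real.exp (-(κ * R₂)) := by
          apply Real.exp_le_exp.2
          have := (hSnorm y).1
          rw [h2] at this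
          rw [h2]
          nlinarith
        simp only [sub_zero]
        nlinarith [hw0 y]
      right
      refine ⟨?_, hsup y (hR₁.trans h1), ?_⟩
      · have ho : IsOpen {y : Euc d | R₁ < ‖y‖ ∧ ‖y‖ < R₂} :=
          isOpen_Ioo.preimage continuous_norm
        exact Filter.mem_of_superset (ho.mem_nhds ⟨h1, h2⟩) fun y hy => ⟨hy.1.le, hy.2.le⟩
      · rw [← Finset.mul_sum, sum_radial]
        simp only [sub_zero]
        have hs := hSsq (‖y‖ ^ 2) (sq_nonneg _)
        have hSge : κ ^ 2 + κ * d + 1 ≤ S (‖y‖ ^ 2) := by linarith [(hSnorm y).1]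
        set s := S (‖y‖ ^ 2) with hsdef
        have hd0 : (0 : ℝ) ≤ d := Nat.cast_nonneg d
        have hs1 : 1 ≤ s := by nlinarith [mul_nonneg (zero_le_one.trans hκ1) hd0]
        have hs0 : 0 < s := by linarith
        have hy2 : ‖y‖ ^ 2 = s ^ 2 - 1 := by linarith
        have h4 : c < 4 * ‖y‖ ^ 2 * (κ ^ 2 / (4 * s ^ 2) + κ / (4 * s ^ 3))
            + 2 * d * (-κ / (2 * s)) := by
          have e : 4 * ‖y‖ ^ 2 * (κ ^ 2 / (4 * s ^ 2) + κ / (4 * s ^ 3))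
            + 2 * d * (-κ / (2 * s)) =
            κ ^ 2 - (κ ^ 2 / s + κ * d) / s + κ * (s ^ 2 - 1) / s ^ 3 := by
            rw [hy2]; field_simp; ring
          rw [e]
          have h5 : 0 ≤ κ * (s ^ 2 - 1) / s ^ 3 := by
            have : 0 ≤ s ^ 2 - 1 := by nlinarith
            positivity
          have h6 : κ ^ 2 / s ≤ κ ^ 2 := div_le_self (sq_nonneg _) hs1
          have h7 : (κ ^ 2 / s + κ * d) / s < 1 := by
            rw [div_lt_one hs0]; linarith
          linarith
        have h8 := mul_lt_mul_of_pos_right h4 (mul_pos hm0 hHpos)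
        have h9 : 0 ≤ c * ε := by positivity
        linarith
  refine le_trans ?_ hlow
  rw [mul_assoc, ← Real.exp_add]
  refine mul_le_mul_of_nonneg_left (Real.exp_le_exp.2 ?_) hm0.le
  nlinarith [(hSnorm x).2]

/-! ### Cutting off near the obstacle -/

lemma exists_contDiff_extension {d : ℕ} {z : Euc d} {ρ ρ₁ ρ₂ : ℝ} (hρ : 0 ≤ ρ) (h01 : ρ < ρ₁)
    (h12 : ρ₁ < ρ₂) {u : Euc d → ℝ} (hu : ContDiffOn ℝ 2 u (closedBall z ρ)ᶜ) :
    ∃ U : Euc d → ℝ, ContDiff ℝ 2 U ∧ ∀ x, ρ₂ ≤ ‖x - z‖ → U x = u x := by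
  let χ : ContDiffBump z := ⟨ρ₁, ρ₂, by linarith, h12⟩
  refine ⟨fun x => (1 - χ x) * u x, contDiff_iff_contDiffAt.2 fun x => ?_, fun x hx => ?_⟩
  · by_cases hx : x ∈ closedBall z ρ
    · have h1 : (fun x => (1 - χ x) * u x) =ᶠ[nhds x] fun _ => 0 := by
        filter_upwards [χ.eventuallyEq_one_of_mem_ball (closedBall_subset_ball h01 hx)] with y hy
        simp [hy]
      exact contDiffAt_const.congr_of_eventuallyEq h1
    · exact (contDiffAt_const.sub χ.contDiffAt).mul
        (hu.contDiffAt (isClosed_closedBall.isOpen_compl.mem_nhds hx))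
  · have : χ x = 0 := χ.zero_of_le_dist (by rw [dist_eq_norm]; exact hx)
    simp [this]


/-! ### The exterior problem -/

lemma sum_pd2_sq {d : ℕ} {v : Euc d → ℝ} (hv : ContDiff ℝ 2 v) (x : Euc d) :
    ∑ i, pd2 (fun y => v y ^ 2) i i x =
      2 * (∑ i, pd v i x ^ 2) + 2 * v x * ∑ i, pd2 v i i x := by
  have h1 : ∀ i, pd (fun y => v y ^ 2) i = fun y => 2 * v y * pd v i y := by
    intro i
    funext y
    have hy : DifferentiableAt ℝ v y := (hv.differentiable (by norm_num)) y
    unfold pd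
    rw [fderiv_fun_pow 2 hy]
    simp
  have h2 : ∀ i, pd2 (fun y => v y ^ 2) i i x = 2 * pd v i x ^ 2 + 2 * v x * pd2 v i i x := by
    intro i
    have hx : DifferentiableAt ℝ v x := (hv.differentiable (by norm_num)) x
    have hx1 : DifferentiableAt ℝ (fun y => pd v i y) x :=
      ((hv.pd (m := 1) (by norm_num) i).differentiable (by norm_num)) x
    unfold pd2
    rw [h1 i, fderiv_fun_mul (hx.const_mul 2) hx1, fderiv_const_mul hx]
    simp only [add_apply, smul_apply, smul_eq_mul]
    change _ + pd v i x * (2 * pd v i x) = _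
    ring
  simp_rw [h2, Finset.sum_add_distrib, Finset.mul_sum]

lemma drift_sq_le {d : ℕ} {M : ℝ} (β : Euc d) (hβ : ‖β‖ ≤ M) (p : Fin d → ℝ) :
    (∑ i, β i * p i) ^ 2 ≤ M ^ 2 * ∑ i, p i ^ 2 := by
  have h2 : ∑ i, β i ^ 2 ≤ M ^ 2 := by
    rw [← EuclideanSpace.real_norm_sq_eq]
    gcongr
  refine (Finset.sum_mul_sq_le_sq_mul_sq _ _ _).trans ?_
  gcongr

lemma laplacian_sq_bound {P L B v W s M q : ℝ} (hP : 0 ≤ P) (hs : 0 ≤ s) (hM : 0 ≤ M)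
    (heq : L + B + W * v = 0) (hB : B ^ 2 ≤ M ^ 2 * P) (hW : |W| ≤ q ^ 2) :
    s * (2 * P + 2 * v * L) ≤ (2 * s + M) * P + (M * s ^ 2 + 2 * s * q ^ 2) * v ^ 2 := by
  obtain ⟨p, hp, rfl⟩ : ∃ p : ℝ, 0 ≤ p ∧ P = p ^ 2 :=
    ⟨√P, Real.sqrt_nonneg P, (Real.sq_sqrt hP).symm⟩
  have hB' : |B| ≤ M * p := by
    refine abs_le_of_sq_le_sq ?_ (by positivity)
    linarith
  have h1 : -(v * B) ≤ |v| * (M * p) := by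
    refine (neg_le_abs _).trans ?_
    rw [abs_mul]
    gcongr
  have h2 : -(W * v ^ 2) ≤ q ^ 2 * v ^ 2 := by
    nlinarith [(abs_le.1 hW).1, sq_nonneg v]
  have h3 : M * (2 * (s * |v|) * p) ≤ M * (s ^ 2 * v ^ 2 + p ^ 2) := by
    gcongr
    nlinarith [sq_nonneg (s * |v| - p), sq_abs v]
  have h4 := mul_le_mul_of_nonneg_left h1 hs
  have h5 := mul_le_mul_of_nonneg_left h2 hs
  have hL : L = -B - W * v := by linarith
  subst hL
  nlinarith

lemma sq_laplacian_bound {P L B v W M q : ℝ} (hP : 0 ≤ P)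
    (heq : L + B + W * v = 0) (hB : B ^ 2 ≤ M ^ 2 * P) (hW : |W| ≤ q ^ 2) :
    L ^ 2 ≤ (2 * M ^ 2 + 2 * (q ^ 2) ^ 2) * (P + v ^ 2) := by
  have hW2 : W ^ 2 ≤ (q ^ 2) ^ 2 := sq_le_sq.2 (by rwa [abs_of_nonneg (sq_nonneg q)])
  have hWv : (W * v) ^ 2 ≤ (q ^ 2) ^ 2 * v ^ 2 := by
    rw [mul_pow]
    gcongr
  have hL : L = -(B + W * v) := by linarith
  have h1 : L ^ 2 ≤ 2 * B ^ 2 + 2 * (W * v) ^ 2 := by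
    rw [hL]
    nlinarith [sq_nonneg (B - W * v)]
  have h2 : 0 ≤ M ^ 2 * v ^ 2 := by positivity
  have h3 : 0 ≤ (q ^ 2) ^ 2 * P := by positivity
  nlinarith

lemma Continuous.integrableOn_ball {d : ℕ} {f : Euc d → ℝ} (hf : Continuous f) (x : Euc d)
    (r : ℝ) : IntegrableOn f (ball x r) :=
  (hf.continuousOn.integrableOn_compact (isCompact_closedBall x r)).mono_set ball_subset_closedBall

/-- The ball averages of `v ^ 2` form a supersolution where (G) and the equation hold. -/
lemma sum_setIntegral_pd2_sq_le {d : ℕ} {v V : Euc d → ℝ} {b : Euc d → Euc d} {M q r C : ℝ}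
    {x : Euc d} (hv : ContDiff ℝ 2 v) (hC : 0 < C) (hM : ∀ y, ‖b y‖ ≤ M)
    (hV : ∀ y, |V y| ≤ q ^ 2)
    (hsol : ∀ y ∈ ball x r, (∑ i, pd2 v i i y) + (∑ i, b y i * pd v i y) + V y * v y = 0)
    (hG : (∫ y in ball x r, ∑ i, pd v i y ^ 2) ≤ C * ∫ y in ball x r, v y ^ 2) :
    ∑ i, ∫ y in ball x r, pd2 (fun y => v y ^ 2) i i y ≤
      2 * (M * √C + q ^ 2 + C) * ∫ y in ball x r, v y ^ 2 := by
  have hM0 : 0 ≤ M := (norm_nonneg _).trans (hM x)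
  have hvc := hv.continuous
  have hpc : ∀ i, Continuous (pd v i) := fun i => (hv.pd (m := 1) (by norm_num) i).continuous
  have hFc : ∀ i, Continuous (pd2 (fun y => v y ^ 2) i i) := fun i =>
    (hv.pow 2).continuous_pd2 i i
  have hs : 0 < √C := Real.sqrt_pos.2 hC
  have hsC : √C ^ 2 = C := Real.sq_sqrt hC.le
  have hI1 : IntegrableOn (fun y => ∑ i, pd v i y ^ 2) (ball x r) :=
    Continuous.integrableOn_ball (by fun_prop) x r
  have hI2 : IntegrableOn (fun y => v y ^ 2) (ball x r) :=
    Continuous.integrableOn_ball (by fun_prop) x r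
  have hI3 : IntegrableOn (fun y => ∑ i, pd2 (fun y => v y ^ 2) i i y) (ball x r) :=
    Continuous.integrableOn_ball (by fun_prop) x r
  have key : ∫ y in ball x r, √C * ∑ i, pd2 (fun y => v y ^ 2) i i y ≤
      ∫ y in ball x r, ((2 * √C + M) * (∑ i, pd v i y ^ 2) +
        (M * √C ^ 2 + 2 * √C * q ^ 2) * v y ^ 2) := by
    refine setIntegral_mono_on (hI3.const_mul _) ((hI1.const_mul _).add (hI2.const_mul _))
      measurableSet_ball fun y hy => ?_
    rw [sum_pd2_sq hv]
    exact laplacian_sq_bound (Finset.sum_nonneg fun i _ => sq_nonneg _) hs.le hM0 (hsol y hy)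
      (drift_sq_le _ (hM y) _) (hV y)
  rw [integral_const_mul, integral_add (hI1.const_mul _) (hI2.const_mul _), integral_const_mul,
    integral_const_mul, integral_finsetSum _ fun i _ => (hFc i).integrableOn_ball x r] at key
  have h1 := mul_le_mul_of_nonneg_left hG (show 0 ≤ 2 * √C + M by positivity)
  refine le_of_mul_le_mul_left (key.trans ?_) hs
  refine (add_le_add_left h1 _).trans (le_of_eq ?_)
  rw [hsC]
  linear_combination (-2 * M * (∫ y in ball x r, v y ^ 2)) * hsC

lemma eq_zero_of_setIntegral_sq_le_zero {d : ℕ} {v : Euc d → ℝ} (hv : Continuous v) {r : ℝ}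
    (hr : 0 < r) {x : Euc d} (h : ∫ y in ball x r, v y ^ 2 ≤ 0) : v x = 0 := by
  by_contra hne
  have hpos : 0 < ∫ y in ball x r, v y ^ 2 := by
    rw [setIntegral_pos_iff_support_of_nonneg_ae (Eventually.of_forall fun y => sq_nonneg _)
      (Continuous.integrableOn_ball (by fun_prop) x r)]
    refine IsOpen.measure_pos _ ?_ ⟨x, by simpa using hne, mem_ball_self hr⟩
    exact (Continuous.isOpen_support (by fun_prop)).inter isOpen_ball
  linarith

/-- Exponential lower bound for ball averages from (G), for solutions in an exterior domain. -/
lemma exists_exp_le_setIntegral {d : ℕ} (hd : 2 ≤ d) {z : Euc d} {ρ : ℝ} (hρ : 0 ≤ ρ)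
    {b : Euc d → Euc d} {V u : Euc d → ℝ} {M q r C : ℝ} (hM : ∀ y, ‖b y‖ ≤ M)
    (hV : ∀ y, |V y| ≤ q ^ 2) (hu : ContDiffOn ℝ 2 u (closedBall z ρ)ᶜ)
    (hunz : ∃ x ∉ closedBall z ρ, u x ≠ 0)
    (hsol : ∀ x ∉ closedBall z ρ,
      (∑ i, pd2 u i i x) + (∑ i, b x i * pd u i x) + V x * u x = 0)
    (hr : 0 < r) (hC : 0 < C)
    (hG : ∃ R₀, ∀ x : Euc d, R₀ ≤ ‖x‖ →
      (∫ y in ball x r, ∑ i, pd u i y ^ 2) ≤ C * ∫ y in ball x r, u y ^ 2) :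
    ∃ c₁ > 0, ∃ R₁, ∀ x : Euc d, R₁ ≤ ‖x‖ →
      c₁ * Real.exp (-((√(2 * (M * √C + q ^ 2 + C)) + 1) * ‖x‖)) ≤ ∫ y in ball x r, u y ^ 2 := by
  obtain ⟨x₀, hx₀, hux₀⟩ := hunz
  obtain ⟨R₀, hG⟩ := hG
  have hM0 : 0 ≤ M := (norm_nonneg _).trans (hM x₀)
  rw [mem_closedBall_iff_norm, not_le] at hx₀
  obtain ⟨ρ₃, h03, h3⟩ := exists_between hx₀
  obtain ⟨ρ₂, h02, h23⟩ := exists_between h03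
  obtain ⟨ρ₁, h01, h12⟩ := exists_between h02
  obtain ⟨U, hU, hUu⟩ := exists_contDiff_extension hρ h01 h12 hu
  have hloc : ∀ y, ρ₂ < ‖y - z‖ → U =ᶠ[nhds y] u := by
    intro y hy
    have ho : IsOpen {y : Euc d | ρ₂ < ‖y - z‖} := isOpen_lt continuous_const (by fun_prop)
    filter_upwards [ho.mem_nhds hy] with y' hy' using hUu y' (le_of_lt hy')
  have hUsol : ∀ y, ρ₂ < ‖y - z‖ →
      (∑ i, pd2 U i i y) + (∑ i, b y i * pd U i y) + V y * U y = 0 := by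
    intro y hy
    have hy' : y ∉ closedBall z ρ := by
      rw [mem_closedBall_iff_norm, not_le]
      exact h02.trans hy
    rw [← hsol y hy']
    simp_rw [(hloc y hy).pd_eq, (hloc y hy).pd2_eq, hUu y hy.le]
  set R := max (max R₀ 0) (‖z‖ + ρ₂ + r + 1) with hR
  have hR0 : 0 ≤ R := (le_max_right _ _).trans (le_max_left _ _)
  have hR₀ : R₀ ≤ R := (le_max_left _ _).trans (le_max_left _ _)
  have hfar : ∀ x, R < ‖x‖ → ∀ y ∈ ball x r, ρ₂ < ‖y - z‖ := by
    intro x hx y hy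
    rw [mem_ball_iff_norm'] at hy
    have h1 : ‖x‖ ≤ ‖x - y‖ + ‖y - z‖ + ‖z‖ := by
      calc ‖x‖ = ‖(x - y) + (y - z) + z‖ := by congr 1; abel
        _ ≤ _ := norm_add₃_le
    have h2 : ‖z‖ + ρ₂ + r + 1 ≤ R := le_max_right _ _
    linarith
  have hint : ∀ x, R < ‖x‖ → ∫ y in ball x r, U y ^ 2 = ∫ y in ball x r, u y ^ 2 := fun x hx =>
    setIntegral_congr_fun measurableSet_ball fun y hy => by
      simp only [hUu y (hfar x hx y hy).le]
  have hintp : ∀ x, R < ‖x‖ →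
      ∫ y in ball x r, ∑ i, pd U i y ^ 2 = ∫ y in ball x r, ∑ i, pd u i y ^ 2 := fun x hx =>
    setIntegral_congr_fun measurableSet_ball fun y hy => by
      simp only [(hloc y (hfar x hx y hy)).pd_eq]
  set w : Euc d → ℝ := fun x => ∫ y in ball x r, U y ^ 2 with hw
  have hwc : Continuous w := continuous_setIntegral_ball (by fun_prop) hr
  have hw2 := hasSecondPartials_setIntegral_ball (hU.pow 2) hr
  have hw0 : ∀ x, 0 ≤ w x := fun x => integral_nonneg fun y => sq_nonneg _
  have hK : 0 ≤ 2 * (M * √C + q ^ 2 + C) := by positivity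
  have hsup : ∀ x, R < ‖x‖ → ∑ i, ∫ y in ball x r, pd2 (fun y => U y ^ 2) i i y ≤
      2 * (M * √C + q ^ 2 + C) * w x := fun x hx =>
    sum_setIntegral_pd2_sq_le hU hC hM hV (fun y hy => hUsol y (hfar x hx y hy))
      (by rw [hint x hx, hintp x hx]; exact hG x (hR₀.trans hx.le))
  have hpos : ∃ x, R < ‖x‖ ∧ 0 < w x := by
    by_contra! hneg
    have hcs : HasCompactSupport U := by
      refine HasCompactSupport.intro (isCompact_closedBall (0 : Euc d) R) fun x hx => ?_
      rw [mem_closedBall_zero_iff, not_le] at hx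
      exact eq_zero_of_setIntegral_sq_le_zero hU.continuous hr (hneg x hx)
    have hzero := eq_zero_of_sq_laplacian_le z (A := 2 * M ^ 2 + 2 * (q ^ 2) ^ 2)
      (hρ.trans_lt h03) hU hcs (fun y hy =>
        sq_laplacian_bound (Finset.sum_nonneg fun i _ => sq_nonneg _)
          (hUsol y (h23.trans_le hy)) (drift_sq_le _ (hM y) _) (hV y)) x₀ h3
    exact hux₀ ((hUu x₀ (h23.trans h3).le).symm.trans hzero)
  obtain ⟨c₁, hc₁, R₁, h⟩ := exp_le_of_pos hK hwc hw2 hw0 hsup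
    (pos_of_exists_pos hd hK hR0 hwc hw2 hw0 hsup hpos)
  refine ⟨c₁, hc₁, max R₁ (R + 1), fun x hx => ?_⟩
  rw [← hint x (by linarith [le_max_right R₁ (R + 1)])]
  exact h x ((le_max_left _ _).trans hx)

/-- An exponential lower bound on ball averages is incompatible with decay at the same rate. -/
lemma false_of_exp_decay {d : ℕ} (hd : 2 ≤ d) {z : Euc d} {ρ : ℝ} {u : Euc d → ℝ} {r κ c₁ R₁ A : ℝ}
    (hκ : 0 < κ) (hc₁ : 0 < c₁)
    (hlow : ∀ x : Euc d, R₁ ≤ ‖x‖ → c₁ * Real.exp (-(κ * ‖x‖)) ≤ ∫ y in ball x r, u y ^ 2)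
    (hdec : ∀ x ∉ closedBall z ρ, |u x| ≤ A * Real.exp (-(κ * ‖x‖))) : False := by
  set B := A ^ 2 * Real.exp (2 * (κ * r)) * volume.real (ball (0 : Euc d) r) with hB
  have key : ∀ x : Euc d, R₁ ≤ ‖x‖ → ‖z‖ + ρ + r ≤ ‖x‖ → c₁ * Real.exp (κ * ‖x‖) ≤ B := by
    intro x hx1 hx2
    have hb : ∀ y ∈ ball x r,
        ‖u y ^ 2‖ ≤ A ^ 2 * Real.exp (2 * (κ * r)) * Real.exp (-(2 * (κ * ‖x‖))) := by
      intro y hy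
      rw [mem_ball_iff_norm'] at hy
      have h1 : ‖x‖ ≤ ‖x - y‖ + ‖y - z‖ + ‖z‖ := by
        calc ‖x‖ = ‖(x - y) + (y - z) + z‖ := by congr 1; abel
          _ ≤ _ := norm_add₃_le
      have h2 : y ∉ closedBall z ρ := by
        rw [mem_closedBall_iff_norm, not_le]
        linarith
      have h3 : ‖x‖ ≤ ‖y‖ + r := by linarith [norm_le_norm_sub_add x y]
      rw [Real.norm_eq_abs, abs_pow]
      calc |u y| ^ 2 ≤ (A * Real.exp (-(κ * ‖y‖))) ^ 2 := by
            gcongr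
            exact hdec y h2
        _ = A ^ 2 * Real.exp (-(2 * (κ * ‖y‖))) := by
            rw [mul_pow, ← Real.exp_nat_mul]
            congr 2
            push_cast
            ring
        _ ≤ A ^ 2 * Real.exp (2 * (κ * r) + -(2 * (κ * ‖x‖))) := by
            gcongr
            nlinarith
        _ = _ := by rw [Real.exp_add, mul_assoc]
    have h1 := norm_setIntegral_le_of_norm_le_const (μ := volume) measure_ball_lt_top hb
    have h2 := (hlow x hx1).trans ((le_abs_self _).trans h1)
    have h3 : volume.real (ball x r) = volume.real (ball (0 : Euc d) r) := by
      rw [measureReal_def, measureReal_def, Measure.addHaar_ball_center]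
    rw [h3] at h2
    have h4 := mul_le_mul_of_nonneg_right h2 (Real.exp_pos (2 * (κ * ‖x‖))).le
    have h5 : Real.exp (-(κ * ‖x‖)) * Real.exp (2 * (κ * ‖x‖)) = Real.exp (κ * ‖x‖) := by
      rw [← Real.exp_add]
      congr 1
      ring
    have h6 : Real.exp (-(2 * (κ * ‖x‖))) * Real.exp (2 * (κ * ‖x‖)) = 1 := by
      rw [← Real.exp_add, neg_add_cancel, Real.exp_zero]
    calc c₁ * Real.exp (κ * ‖x‖)
        = c₁ * Real.exp (-(κ * ‖x‖)) * Real.exp (2 * (κ * ‖x‖)) := by rw [mul_assoc, h5]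
      _ ≤ _ := h4
      _ = B * (Real.exp (-(2 * (κ * ‖x‖))) * Real.exp (2 * (κ * ‖x‖))) := by rw [hB]; ring
      _ = B := by rw [h6, mul_one]
  have hlim : Tendsto (fun t : ℝ => c₁ * Real.exp (κ * t)) atTop atTop :=
    (Real.tendsto_exp_atTop.comp (tendsto_id.const_mul_atTop hκ)).const_mul_atTop hc₁
  obtain ⟨t, ht, ht1, ht2, ht0⟩ := ((hlim.eventually_gt_atTop B).and
    ((eventually_ge_atTop R₁).and ((eventually_ge_atTop (‖z‖ + ρ + r)).and
      (eventually_ge_atTop 0)))).exists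
  have hn : ‖EuclideanSpace.single (⟨0, by omega⟩ : Fin d) t‖ = t := by
    rw [PiLp.norm_single, Real.norm_of_nonneg ht0]
  have := key (EuclideanSpace.single (⟨0, by omega⟩ : Fin d) t) (by rwa [hn]) (by rwa [hn])
  rw [hn] at this
  linarith

/-- The concluding remark of Section 4: Landis-type lower bound for solutions
satisfying the reverse Poincaré inequality (G). -/
theorem statement19 {d : ℕ} (hd : 2 ≤ d)
    (z₀ : Euc d) (ρ : ℝ) (hρ : 0 ≤ ρ)
    (b : Euc d → Euc d) (V : Euc d → ℝ) (hbMeas : Measurable b) (hVmeas : Measurable V)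
    (M q : ℝ) (hbM : ∀ x : Euc d, ‖b x‖ ≤ M) (hVq : ∀ x : Euc d, |V x| ≤ q ^ 2)
    (u : Euc d → ℝ) (huC2 : ContDiffOn ℝ 2 u (closedBall z₀ ρ)ᶜ)
    (hunz : ∃ x ∉ closedBall z₀ ρ, u x ≠ 0)
    (hsol : ∀ x ∉ closedBall z₀ ρ,
      (∑ i, pd2 u i i x) + (∑ i, b x i * pd u i x) + V x * u x = 0)
    (r C : ℝ) (hr : 0 < r) (hC : 0 < C)
    (hG : ∃ R₀, ∀ x : Euc d, R₀ ≤ ‖x‖ →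
      (∫ y in Metric.ball x r, ∑ i, (pd u i y) ^ 2) ≤ C * ∫ y in Metric.ball x r, (u y) ^ 2) :
    (∃ Cκ > 0, ∃ R₁, ∀ x : Euc d, R₁ ≤ ‖x‖ →
      Cκ * Real.exp (-((Real.sqrt (2 * (M * Real.sqrt C + q ^ 2 + C)) + 1) * ‖x‖)) ≤
        ∫ y in Metric.ball x r, (u y) ^ 2) ∧
    ((∀ k : ℝ, 0 < k → ∃ Ck, ∀ x ∉ closedBall z₀ ρ,
        |u x| ≤ Ck * Real.exp (-(k * ‖x‖))) →
      ∀ x ∉ closedBall z₀ ρ, u x = 0) := by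
  obtain ⟨c₁, hc₁, R₁, h⟩ :=
    exists_exp_le_setIntegral hd hρ hbM hVq huC2 hunz hsol hr hC hG
  have hκ : 0 < √(2 * (M * √C + q ^ 2 + C)) + 1 := by positivity
  refine ⟨⟨c₁, hc₁, R₁, h⟩, fun hdec => ?_⟩
  obtain ⟨A, hA⟩ := hdec _ hκ
  exact (false_of_exp_decay hd hκ hc₁ h hA).elim
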